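/- In the field ℚ(t) of rational functions, Δ_{3,3,3,3}(t) = P(t)·Or_{3,3,3,3}(t), where P(t) = (1−t⁶)(1−t⁶)/((1−t³)(1−t³)(1−t³)(1−t²)); equivalently Δ_{3,3,3,3}(t) = (1−t³)(1−t⁶)²/((1−t²)(1−t)²). (This is the identity ∏_{j=1}^{2} ζ̄_{X,j}(t) = P_{X̃₀}(t)·Or_{X̃₀}(t) of the main theorem for the virtual singularity X = I_{1,−1}, whose dual series has k=0 element I_{1,0} with weight system (3,3,3,2; 6,6) and whose Gabrielov numbers are 3,3;3,3.) -/

import Mathlib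

/-!
Write `s = 1 + t + t²`, so that `(t³ - 1)/(t - 1) = s` and `(t² - 1)/(t - 1) = t + 1`. Then
`Δ_{3,3,3,3} = s³ · ((t³ - 2t² - 2t + 1) s + 4 t² (t + 1))`, and the second factor equals
`(t + 1)(t² - t + 1)²`. Both right-hand sides reduce to the same product, because
`1 - t⁶ = (1 - t)(1 + t) s (t² - t + 1)`. The cancellations are legitimate since `1 - tⁿ ≠ 0` in
`ℚ(t)` for `n > 0` (`one_sub_t_pow_ne_zero`).
-/

open Finset

/-- The generator `t` of the field `ℚ(t)` of rational functions. -/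
noncomputable def t : RatFunc ℚ := RatFunc.X

/-- `Δ_{γ₁,γ₂,γ₃,γ₄}(t)`, the characteristic polynomial of the Coxeter element
corresponding to the graph `S_{γ₁,γ₂,γ₃,γ₄}`. -/
noncomputable def Δ (γ : Fin 4 → ℕ) : RatFunc ℚ :=
  (t ^ 3 - 2 * t ^ 2 - 2 * t + 1) * ∏ i, (t ^ γ i - 1) / (t - 1)
    + t ^ 2 * ∑ i, ((t ^ (γ i - 1) - 1) / (t - 1)) *
        ∏ j ∈ univ.erase i, (t ^ γ j - 1) / (t - 1)

/-- `Or_{γ₁,γ₂,γ₃,γ₄}(t) = (1-t)⁻² · ∏ᵢ (1 - t^{γᵢ})`. -/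
noncomputable def Orb (γ : Fin 4 → ℕ) : RatFunc ℚ :=
  ((1 - t) ^ 2)⁻¹ * ∏ i, (1 - t ^ γ i)

theorem one_sub_t_pow_ne_zero {n : ℕ} (hn : 0 < n) : (1 : RatFunc ℚ) - t ^ n ≠ 0 := by
  have h : (Polynomial.X ^ n - 1 : Polynomial ℚ) ≠ 0 := Polynomial.X_pow_sub_C_ne_zero hn 1
  intro h0
  apply h
  apply RatFunc.algebraMap_injective ℚ
  rw [map_sub, map_pow, RatFunc.algebraMap_X, map_one, map_zero]
  unfold t at h0
  linear_combination -h0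

theorem Δ_3333_factored :
    Δ ![3, 3, 3, 3] = (1 + t + t ^ 2) ^ 3 * ((t + 1) * (t ^ 2 - t + 1) ^ 2) := by
  have h1 : t - 1 ≠ 0 := by
    have h := one_sub_t_pow_ne_zero one_pos
    intro h0
    exact h (by linear_combination -h0)
  have h3 : (t ^ 3 - 1) / (t - 1) = 1 + t + t ^ 2 := by
    rw [div_eq_iff h1]; ring
  have h2 : (t ^ 2 - 1) / (t - 1) = t + 1 := by
    rw [div_eq_iff h1]; ring
  have hγ : ∀ i, (![3, 3, 3, 3] : Fin 4 → ℕ) i = 3 := by decide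
  simp only [Δ, hγ, Nat.reduceSub, h3, h2, prod_const, sum_const, card_erase_of_mem (mem_univ _),
    card_univ, Fintype.card_fin, nsmul_eq_mul]
  push_cast
  ring

/-- The main theorem for the virtual singularity `I_{1,-1}` (Gabrielov numbers
`3,3;3,3`; dual `k=0` element `I_{1,0}` with weight system `(3,3,3,2;6,6)`). -/
theorem stmt_19 :
    Δ ![3, 3, 3, 3]
      = (1 - t ^ 6) * (1 - t ^ 6) /
          ((1 - t ^ 3) * (1 - t ^ 3) * (1 - t ^ 3) * (1 - t ^ 2))
        * Orb ![3, 3, 3, 3]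
    ∧ Δ ![3, 3, 3, 3]
        = (1 - t ^ 3) * (1 - t ^ 6) ^ 2 / ((1 - t ^ 2) * (1 - t) ^ 2) := by
  have h1 : 1 - t ≠ 0 := by simpa using one_sub_t_pow_ne_zero one_pos
  have h2 := one_sub_t_pow_ne_zero two_pos
  have h3 := one_sub_t_pow_ne_zero three_pos
  have hγ : ∀ i, (![3, 3, 3, 3] : Fin 4 → ℕ) i = 3 := by decide
  have hΔ : Δ ![3, 3, 3, 3] = (1 - t ^ 3) * (1 - t ^ 6) ^ 2 / ((1 - t ^ 2) * (1 - t) ^ 2) := by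
    rw [Δ_3333_factored, eq_div_iff (mul_ne_zero h2 (pow_ne_zero 2 h1))]
    ring
  refine ⟨?_, hΔ⟩
  simp only [hΔ, Orb, hγ, prod_const, card_univ, Fintype.card_fin]
  field_simp
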